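/- Let α* = arcsin(d/2), Ξ = [0,π] × [α*, π−α*], and C(d,σ,δ) = min(L(d,σ,δ), R(d,σ,δ)) with L(d,σ,δ) = 2π − 4·arcsin(d_L(d,σ,δ)/4) + 2δ and R(d,σ,δ) = 4π − 4·arcsin(d_R(d,σ,δ)/4) − 2δ. If 0 < d ≤ √2, then there exists δ₀ ∈ [α*, π−α*] such that C(d, π, δ₀) = sup{ C(d,σ,δ) : (σ,δ) ∈ Ξ }. If √2 ≤ d < 2, then there exists σ₀ ∈ [0, π] such that C(d, σ₀, π−α*) = sup{ C(d,σ,δ) : (σ,δ) ∈ Ξ }. -/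

import Mathlib

open Real

/-- Distance between the centers of the two left disks, in `(σ, δ)` coordinates. -/
noncomputable def dL (d σ δ : ℝ) : ℝ :=
  Real.sqrt (d ^ 2 - 4 * d * Real.sin δ * Real.cos σ + 4 * Real.sin δ ^ 2)

/-- Distance between the centers of the two right disks, in `(σ, δ)` coordinates. -/
noncomputable def dR (d σ δ : ℝ) : ℝ :=
  Real.sqrt (d ^ 2 + 4 * d * Real.sin δ * Real.cos σ + 4 * Real.sin δ ^ 2)

/-- Length of the LRL-type bounded-curvature path. -/
noncomputable def Lfun (d σ δ : ℝ) : ℝ :=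
  2 * π - 4 * Real.arcsin (dL d σ δ / 4) + 2 * δ

/-- Length of the RLR-type bounded-curvature path. -/
noncomputable def Rfun (d σ δ : ℝ) : ℝ :=
  4 * π - 4 * Real.arcsin (dR d σ δ / 4) - 2 * δ

/-- Minimum of the LRL- and RLR-path lengths. -/
noncomputable def Cfun (d σ δ : ℝ) : ℝ :=
  min (Lfun d σ δ) (Rfun d σ δ)

/-- The supremum of `Cfun` over the rectangle `Ξ(d) = [0, π] × [α*, π - α*]`,
where `α* = arcsin (d/2)`. -/
noncomputable def Afun (d : ℝ) : ℝ :=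
  sSup ((fun p : ℝ × ℝ => Cfun d p.1 p.2) ''
    (Set.Icc 0 π ×ˢ Set.Icc (Real.arcsin (d / 2)) (π - Real.arcsin (d / 2))))

lemma aux_sin_ge {d δ : ℝ} (h0 : 0 < d) (h2 : d < 2)
    (h : δ ∈ Set.Icc (Real.arcsin (d / 2)) (π - Real.arcsin (d / 2))) : d / 2 ≤ sin δ := by
  obtain ⟨h1, h3⟩ := h
  have hs : sin (arcsin (d / 2)) = d / 2 := sin_arcsin (by linarith) (by linarith)
  have ha0 : 0 ≤ arcsin (d / 2) := arcsin_nonneg.2 (by linarith)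
  rcases le_total δ (π / 2) with h | h
  · rw [← hs]
    exact sin_le_sin_of_le_of_le_pi_div_two (by linarith [pi_pos]) h h1
  · rw [← hs, ← sin_pi_sub δ]
    exact sin_le_sin_of_le_of_le_pi_div_two (by linarith [pi_pos]) (by linarith) (by linarith)

lemma aux_sym (d σ δ : ℝ) : Lfun d (π - σ) (π - δ) = Rfun d σ δ := by
  unfold Lfun Rfun dL dR
  rw [sin_pi_sub, cos_pi_sub]
  ring_nf

lemma aux_sym' (d σ δ : ℝ) : Rfun d (π - σ) (π - δ) = Lfun d σ δ := by
  unfold Lfun Rfun dL dR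
  rw [sin_pi_sub, cos_pi_sub]
  ring_nf

lemma aux_symC (d σ δ : ℝ) : Cfun d (π - σ) (π - δ) = Cfun d σ δ := by
  unfold Cfun
  rw [aux_sym, aux_sym', min_comm]

lemma aux_Rmono {d σ σ' δ : ℝ} (h0 : 0 < d) (hs : 0 ≤ sin δ) (h1 : 0 ≤ σ) (h2 : σ ≤ σ')
    (h3 : σ' ≤ π) : Rfun d σ δ ≤ Rfun d σ' δ := by
  have hc : cos σ' ≤ cos σ := cos_le_cos_of_nonneg_of_le_pi h1 h3 h2
  have : dR d σ' δ ≤ dR d σ δ := by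
    unfold dR
    apply Real.sqrt_le_sqrt
    have := mul_le_mul_of_nonneg_left hc (by positivity : 0 ≤ 4 * d * sin δ)
    linarith
  have := monotone_arcsin (div_le_div_of_nonneg_right this (by norm_num : (0:ℝ) ≤ 4))
  unfold Rfun
  linarith

lemma aux_contL (d : ℝ) : Continuous (fun p : ℝ × ℝ => Lfun d p.1 p.2) := by
  unfold Lfun dL
  fun_prop

lemma aux_contR (d : ℝ) : Continuous (fun p : ℝ × ℝ => Rfun d p.1 p.2) := by
  unfold Rfun dR
  fun_prop

lemma aux_contC (d : ℝ) : Continuous (fun p : ℝ × ℝ => Cfun d p.1 p.2) :=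
  (aux_contL d).min (aux_contR d)

lemma aux_eq {d σ δ : ℝ} (h0 : 0 < d) (h2 : d < 2) (hs : 0 ≤ sin δ)
    (h : Lfun d σ δ = Rfun d σ δ) :
    ∃ K, 0 ≤ K ∧ K ≤ π ∧ Cfun d σ δ = 3 * π - 2 * K ∧
      cos K * sin δ = 1 - d ^ 2 / 8 - sin δ ^ 2 / 2 := by
  have hs1 := sin_le_one δ
  have hc1 := cos_le_one σ
  have hc2 := neg_one_le_cos σ
  have hds : 0 ≤ d * sin δ := by positivity
  have hds2 : d * sin δ ≤ 2 := by nlinarith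
  have hb1 : d * sin δ * cos σ ≤ d * sin δ := by nlinarith
  have hb2 : -(d * sin δ) ≤ d * sin δ * cos σ := by nlinarith
  have eL : dL d σ δ ^ 2 = d ^ 2 - 4 * d * sin δ * cos σ + 4 * sin δ ^ 2 := by
    unfold dL
    apply Real.sq_sqrt
    nlinarith [sq_nonneg (d - 2 * sin δ)]
  have eR : dR d σ δ ^ 2 = d ^ 2 + 4 * d * sin δ * cos σ + 4 * sin δ ^ 2 := by
    unfold dR
    apply Real.sq_sqrt
    nlinarith [sq_nonneg (d - 2 * sin δ)]
  have nL : 0 ≤ dL d σ δ := Real.sqrt_nonneg _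
  have nR : 0 ≤ dR d σ δ := Real.sqrt_nonneg _
  have uL : dL d σ δ ≤ 4 := by nlinarith
  have uR : dR d σ δ ≤ 4 := by nlinarith
  set A := arcsin (dL d σ δ / 4) with hA
  set B := arcsin (dR d σ δ / 4) with hB
  have sA : sin A = dL d σ δ / 4 := sin_arcsin (by linarith) (by linarith)
  have sB : sin B = dR d σ δ / 4 := sin_arcsin (by linarith) (by linarith)
  have A0 : 0 ≤ A := arcsin_nonneg.2 (by linarith)
  have B0 : 0 ≤ B := arcsin_nonneg.2 (by linarith)
  have A1 : A ≤ π / 2 := arcsin_le_pi_div_two _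
  have B1 : B ≤ π / 2 := arcsin_le_pi_div_two _
  have eLf : Lfun d σ δ = 2 * π - 4 * A + 2 * δ := rfl
  have eRf : Rfun d σ δ = 4 * π - 4 * B - 2 * δ := rfl
  have hAB : δ = π / 2 - (B - A) := by linarith
  refine ⟨A + B, by linarith, by linarith, ?_, ?_⟩
  · unfold Cfun
    rw [← h, min_self]
    linarith
  · have e1 : sin δ = cos (B - A) := by rw [hAB, sin_pi_div_two_sub]
    have e2 : cos (A + B) * cos (B - A) = 1 - sin A ^ 2 - sin B ^ 2 := by
      rw [cos_add, cos_sub]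
      have := sin_sq_add_cos_sq A
      have := sin_sq_add_cos_sq B
      have hA2 : cos A ^ 2 = 1 - sin A ^ 2 := by linarith
      have hB2 : cos B ^ 2 = 1 - sin B ^ 2 := by linarith
      calc _ = cos A ^ 2 * cos B ^ 2 - sin A ^ 2 * sin B ^ 2 := by ring
        _ = _ := by rw [hA2, hB2]; ring
    rw [← e1, sA, sB] at e2
    nlinarith

lemma aux_cmp {d σ δ σ' δ' : ℝ} (h0 : 0 < d) (h2 : d < 2) (hs' : 0 < sin δ')
    (hs : sin δ' ≤ sin δ)
    (h : Lfun d σ δ = Rfun d σ δ) (h' : Lfun d σ' δ' = Rfun d σ' δ') :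
    Cfun d σ δ ≤ Cfun d σ' δ' := by
  obtain ⟨K, K0, K1, eK, cK⟩ := aux_eq h0 h2 (hs'.le.trans hs) h
  obtain ⟨K', K0', K1', eK', cK'⟩ := aux_eq h0 h2 hs'.le h'
  have hspos : 0 < sin δ := hs'.trans_le hs
  have hc : cos K ≤ cos K' := by
    have e : cos K = (1 - d ^ 2 / 8) / sin δ - sin δ / 2 := by
      field_simp; linarith
    have e' : cos K' = (1 - d ^ 2 / 8) / sin δ' - sin δ' / 2 := by
      field_simp; linarith
    have : (1 - d ^ 2 / 8) / sin δ ≤ (1 - d ^ 2 / 8) / sin δ' :=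
      div_le_div_of_nonneg_left (by nlinarith) hs' hs
    linarith
  have : K' ≤ K := (strictAntiOn_cos.le_iff_ge ⟨K0, K1⟩ ⟨K0', K1'⟩).1 hc
  linarith

/-- Push to the right: from `R ≤ L` get equality or the boundary. -/
lemma aux_push {d σ δ : ℝ} (h0 : 0 < d) (hs : 0 ≤ sin δ) (hσ : σ ∈ Set.Icc 0 π)
    (h : Rfun d σ δ ≤ Lfun d σ δ) :
    ∃ σ' ∈ Set.Icc 0 π, Cfun d σ δ ≤ Cfun d σ' δ ∧
      (Lfun d σ' δ = Rfun d σ' δ ∨ (σ' = π ∧ Rfun d σ' δ ≤ Lfun d σ' δ)) := by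
  have hC : Cfun d σ δ = Rfun d σ δ := min_eq_right h
  rcases le_total (Rfun d π δ) (Lfun d π δ) with h1 | h1
  · refine ⟨π, ⟨pi_pos.le, le_rfl⟩, ?_, Or.inr ⟨rfl, h1⟩⟩
    rw [hC, Cfun, min_eq_right h1]
    exact aux_Rmono h0 hs hσ.1 hσ.2 le_rfl
  · have hc : ContinuousOn (fun x => Rfun d x δ - Lfun d x δ) (Set.Icc σ π) := by
      have a := (aux_contR d).comp (by fun_prop : Continuous (fun x : ℝ => (x, δ)))
      have b := (aux_contL d).comp (by fun_prop : Continuous (fun x : ℝ => (x, δ)))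
      exact (a.sub b).continuousOn
    obtain ⟨x, hx, hx2⟩ := intermediate_value_Icc hσ.2 hc
      (show (0:ℝ) ∈ Set.Icc _ _ from ⟨by simpa using h, by simpa using h1⟩)
    have e : Lfun d x δ = Rfun d x δ := by
      simp only at hx2; linarith
    refine ⟨x, ⟨hσ.1.trans hx.1, hx.2⟩, ?_, Or.inl e⟩
    rw [hC, Cfun, e, min_self]
    exact aux_Rmono h0 hs hσ.1 hx.1 hx.2

lemma aux_reduce {d σ δ : ℝ} (h0 : 0 < d) (h2 : d < 2) (hσ : σ ∈ Set.Icc 0 π)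
    (hδ : δ ∈ Set.Icc (Real.arcsin (d / 2)) (π - Real.arcsin (d / 2))) :
    ∃ σ' ∈ Set.Icc 0 π, ∃ δ' ∈ Set.Icc (Real.arcsin (d / 2)) (π - Real.arcsin (d / 2)),
      Cfun d σ δ ≤ Cfun d σ' δ' ∧
      ((Lfun d σ' δ' = Rfun d σ' δ' ∧ π / 2 ≤ δ') ∨
        (σ' = π ∧ Rfun d σ' δ' ≤ Lfun d σ' δ')) := by
  wlog h : Rfun d σ δ ≤ Lfun d σ δ generalizing σ δ
  · have := @this (π - σ) (π - δ) ⟨by linarith [hσ.2], by linarith [hσ.1]⟩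
      ⟨by linarith [hδ.2], by linarith [hδ.1]⟩ (by rw [aux_sym, aux_sym']; linarith)
    rwa [aux_symC] at this
  have hs : 0 ≤ sin δ := by linarith [aux_sin_ge h0 h2 hδ]
  obtain ⟨σ', hσ', hC, h1 | h1⟩ := aux_push h0 hs hσ h
  · rcases le_total (π / 2) δ with h3 | h3
    · exact ⟨σ', hσ', δ, hδ, hC, Or.inl ⟨h1, h3⟩⟩
    · refine ⟨π - σ', ⟨by linarith [hσ'.2], by linarith [hσ'.1]⟩, π - δ,
        ⟨by linarith [hδ.2], by linarith [hδ.1]⟩, by rwa [aux_symC],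
        Or.inl ⟨by rw [aux_sym, aux_sym', h1], by linarith⟩⟩
  · exact ⟨σ', hσ', δ, hδ, hC, Or.inr h1⟩

lemma aux_dRpi {d δ : ℝ} (h : d / 2 ≤ sin δ) : dR d π δ = 2 * sin δ - d := by
  unfold dR
  rw [cos_pi, ← Real.sqrt_sq (by linarith : 0 ≤ 2 * sin δ - d)]
  congr 1; ring

lemma aux_dLpi {d δ : ℝ} (h0 : 0 < d) (h : d / 2 ≤ sin δ) : dL d π δ = 2 * sin δ + d := by
  unfold dL
  rw [cos_pi, ← Real.sqrt_sq (by linarith : 0 ≤ 2 * sin δ + d)]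
  congr 1; ring

lemma aux_Ranti {d : ℝ} (h0 : 0 < d) (h2 : d < 2) :
    AntitoneOn (fun δ => Rfun d π δ)
      (Set.Icc (Real.arcsin (d / 2)) (π - Real.arcsin (d / 2))) := by
  have key : MonotoneOn (fun δ => 2 * arcsin ((2 * sin δ - d) / 4) + δ)
      (Set.Icc (Real.arcsin (d / 2)) (π - Real.arcsin (d / 2))) := by
    have hd : ∀ δ ∈ Set.Icc (Real.arcsin (d / 2)) (π - Real.arcsin (d / 2)),
        HasDerivAt (fun δ => 2 * arcsin ((2 * sin δ - d) / 4) + δ)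
          (2 * (1 / √(1 - ((2 * sin δ - d) / 4) ^ 2) * (2 * cos δ / 4)) + 1) δ := by
      intro δ hδ
      have hs := aux_sin_ge h0 h2 hδ
      have hs1 := sin_le_one δ
      have a : HasDerivAt (fun δ => (2 * sin δ - d) / 4) (2 * cos δ / 4) δ :=
        (((hasDerivAt_sin δ).const_mul 2).sub_const d).div_const 4
      have b := (hasDerivAt_arcsin (x := (2 * sin δ - d) / 4)
        (by intro h; linarith) (by intro h; linarith)).comp δ a
      exact (b.const_mul 2).add (hasDerivAt_id δ)
    apply monotoneOn_of_deriv_nonneg (convex_Icc _ _)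
    · intro δ hδ
      exact (hd δ hδ).continuousAt.continuousWithinAt
    · intro δ hδ
      exact (hd δ (interior_subset hδ)).differentiableAt.differentiableWithinAt
    · intro δ hδ
      rw [(hd δ (interior_subset hδ)).deriv]
      have hs := aux_sin_ge h0 h2 (interior_subset hδ)
      have hs1 := sin_le_one δ
      have hpos : 0 < 1 - ((2 * sin δ - d) / 4) ^ 2 := by nlinarith
      have hr : 0 < √(1 - ((2 * sin δ - d) / 4) ^ 2) := Real.sqrt_pos.2 hpos
      have hle : |cos δ| ≤ √(1 - ((2 * sin δ - d) / 4) ^ 2) := by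
        apply Real.abs_le_sqrt
        have := sin_sq_add_cos_sq δ
        nlinarith
      have h3 := neg_abs_le (cos δ)
      have : 2 * (1 / √(1 - ((2 * sin δ - d) / 4) ^ 2) * (2 * cos δ / 4)) + 1
          = (cos δ + √(1 - ((2 * sin δ - d) / 4) ^ 2)) / √(1 - ((2 * sin δ - d) / 4) ^ 2) := by
        generalize √(1 - ((2 * sin δ - d) / 4) ^ 2) = r at hr
        field_simp
        ring
      rw [this]
      exact div_nonneg (by linarith) hr.le
  intro x hx y hy hxy
  have := key hx hy hxy
  simp only [Rfun] at this ⊢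
  rw [aux_dRpi (aux_sin_ge h0 h2 hx), aux_dRpi (aux_sin_ge h0 h2 hy)]
  linarith

lemma aux_Afun {d σ₀ δ₀ : ℝ} (hσ : σ₀ ∈ Set.Icc 0 π)
    (hδ : δ₀ ∈ Set.Icc (Real.arcsin (d / 2)) (π - Real.arcsin (d / 2)))
    (h : ∀ σ ∈ Set.Icc 0 π, ∀ δ ∈ Set.Icc (Real.arcsin (d / 2)) (π - Real.arcsin (d / 2)),
      Cfun d σ δ ≤ Cfun d σ₀ δ₀) : Cfun d σ₀ δ₀ = Afun d := by
  symm
  apply IsGreatest.csSup_eq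
  refine ⟨⟨(σ₀, δ₀), ⟨hσ, hδ⟩, rfl⟩, ?_⟩
  rintro _ ⟨⟨σ, δ⟩, ⟨h1, h2⟩, rfl⟩
  exact h σ h1 δ h2

lemma aux_ivt_δ {d a b : ℝ} (hab : a ≤ b) (ha : Lfun d π a ≤ Rfun d π a)
    (hb : Rfun d π b ≤ Lfun d π b) : ∃ x ∈ Set.Icc a b, Lfun d π x = Rfun d π x := by
  have hc : ContinuousOn (fun x => Lfun d π x - Rfun d π x) (Set.Icc a b) := by
    have r := (aux_contR d).comp (by fun_prop : Continuous (fun x : ℝ => (π, x)))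
    have l := (aux_contL d).comp (by fun_prop : Continuous (fun x : ℝ => (π, x)))
    exact (l.sub r).continuousOn
  obtain ⟨x, hx, hx2⟩ := intermediate_value_Icc hab hc
    (show (0:ℝ) ∈ Set.Icc _ _ from ⟨by simpa using ha, by simpa using hb⟩)
  exact ⟨x, hx, by simp only at hx2; linarith⟩

/-- Let `α* = arcsin (d/2)` and `Ξ = [0, π] × [α*, π - α*]`.
If `0 < d ≤ √2`, the supremum of `C` over `Ξ` is attained at a point with
`σ = π`; if `√2 ≤ d < 2`, it is attained at a point with `δ = π - α*`. -/
theorem C_sup_on_boundary (d : ℝ) :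
    (0 < d → d ≤ Real.sqrt 2 →
      ∃ δ₀ ∈ Set.Icc (Real.arcsin (d / 2)) (π - Real.arcsin (d / 2)),
        Cfun d π δ₀ = Afun d) ∧
    (Real.sqrt 2 ≤ d → d < 2 →
      ∃ σ₀ ∈ Set.Icc (0:ℝ) π,
        Cfun d σ₀ (π - Real.arcsin (d / 2)) = Afun d) := by
  have hq : arcsin (√2 / 2) = π / 4 := by
    rw [← sin_pi_div_four]
    exact arcsin_sin (by linarith [pi_pos]) (by linarith [pi_pos])
  have hπ : (π:ℝ) ∈ Set.Icc 0 π := ⟨pi_pos.le, le_rfl⟩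
  have hpp := pi_pos
  have hmem : ∀ {d : ℝ}, 0 < d → π - arcsin (d / 2) ∈
      Set.Icc (arcsin (d / 2)) (π - arcsin (d / 2)) := by
    intro d _
    exact ⟨by linarith [arcsin_le_pi_div_two (d / 2)], le_rfl⟩
  -- values at the corner
  have hsinα : ∀ {d : ℝ}, 0 < d → d < 2 → sin (π - arcsin (d / 2)) = d / 2 := by
    intro d h0 h2
    rw [sin_pi_sub]; exact sin_arcsin (by linarith) (by linarith)
  have hLc : ∀ {d : ℝ}, 0 < d → d < 2 →
      Lfun d π (π - arcsin (d / 2)) = 4 * π - 6 * arcsin (d / 2) := by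
    intro d h0 h2
    have := aux_dLpi h0 (aux_sin_ge h0 h2 (hmem h0))
    rw [Lfun, this, hsinα h0 h2]
    have : (2 * (d / 2) + d) / 4 = d / 2 := by ring
    rw [this]; ring
  have hRc : ∀ {d : ℝ}, 0 < d → d < 2 →
      Rfun d π (π - arcsin (d / 2)) = 2 * π + 2 * arcsin (d / 2) := by
    intro d h0 h2
    have := aux_dRpi (aux_sin_ge h0 h2 (hmem h0))
    rw [Rfun, this, hsinα h0 h2]
    have : (2 * (d / 2) - d) / 4 = 0 := by ring
    rw [this, arcsin_zero]; ring
  constructor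
  · intro h0 hd
    have h2 : d < 2 := by
      have : √2 < 2 := by rw [Real.sqrt_lt' (by norm_num)]; norm_num
      linarith
    have hα : arcsin (d / 2) ≤ π / 4 := by
      rw [← hq]; exact monotone_arcsin (by linarith)
    have hα0 : 0 ≤ arcsin (d / 2) := arcsin_nonneg.2 (by linarith)
    have hcont : Continuous (fun x => Cfun d π x) := by
      unfold Cfun Lfun Rfun dL dR
      fun_prop
    obtain ⟨δ₀, hδ₀, hmax⟩ := isCompact_Icc.exists_isMaxOn ⟨_, hmem h0⟩ hcont.continuousOn
    replace hmax : ∀ y ∈ Set.Icc (arcsin (d / 2)) (π - arcsin (d / 2)),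
        Cfun d π y ≤ Cfun d π δ₀ := fun y hy => hmax hy
    refine ⟨δ₀, hδ₀, aux_Afun hπ hδ₀ ?_⟩
    intro σ hσ δ hδ
    obtain ⟨σ', hσ', δ', hδ', hC, ⟨he, hge⟩ | ⟨rfl, -⟩⟩ := aux_reduce h0 h2 hσ hδ
    · refine hC.trans ?_
      have hmid : π / 2 ∈ Set.Icc (arcsin (d / 2)) (π - arcsin (d / 2)) :=
        ⟨by linarith, by linarith⟩
      have hs2 := aux_sin_ge h0 h2 hmid
      obtain ⟨y, hy, hye⟩ := @aux_ivt_δ d (π / 2) (π - arcsin (d / 2)) (by linarith)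
        (by
          have : arcsin (dR d π (π / 2) / 4) ≤ arcsin (dL d π (π / 2) / 4) := by
            apply monotone_arcsin
            rw [aux_dRpi hs2, aux_dLpi h0 hs2]
            linarith
          unfold Lfun Rfun
          linarith)
        (by rw [hLc h0 h2, hRc h0 h2]; linarith)
      have hyI : y ∈ Set.Icc (arcsin (d / 2)) (π - arcsin (d / 2)) :=
        ⟨by linarith [hy.1], hy.2⟩
      refine le_trans ?_ (hmax y hyI)
      have hsy := aux_sin_ge h0 h2 hyI
      rcases le_total δ' y with hle | hle
      · apply aux_cmp h0 h2 (by linarith) ?_ he hye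
        rw [← sin_pi_sub δ', ← sin_pi_sub y]
        exact sin_le_sin_of_le_of_le_pi_div_two (by linarith [hy.2]) (by linarith) (by linarith)
      · have h3 : Cfun d σ' δ' ≤ Rfun d σ' δ' := min_le_right _ _
        have h4 := aux_Rmono (δ := δ') h0 (by linarith [aux_sin_ge h0 h2 hδ']) hσ'.1 hσ'.2 le_rfl
        have h5 := aux_Ranti h0 h2 hyI hδ' hle
        have h6 : Cfun d π y = Rfun d π y := by rw [Cfun, hye, min_self]
        simp only at h5 ⊢
        linarith
    · exact hC.trans (hmax _ hδ')
  · intro hd h2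
    have h0 : 0 < d := lt_of_lt_of_le (by positivity) hd
    have hα : π / 4 ≤ arcsin (d / 2) := by
      rw [← hq]; exact monotone_arcsin (by linarith)
    have hα1 := arcsin_le_pi_div_two (d / 2)
    have hcorner : Lfun d π (π - arcsin (d / 2)) ≤ Rfun d π (π - arcsin (d / 2)) := by
      rw [hLc h0 h2, hRc h0 h2]; linarith
    have hsα := hsinα h0 h2
    -- equality point on the top edge
    have hleft : Rfun d 0 (π - arcsin (d / 2)) ≤ Lfun d 0 (π - arcsin (d / 2)) := by
      have h1 : dR d 0 (π - arcsin (d / 2)) = 2 * d := by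
        unfold dR
        rw [cos_zero, hsα, ← Real.sqrt_sq (by linarith : 0 ≤ 2 * d)]
        congr 1; ring
      have h3 : dL d 0 (π - arcsin (d / 2)) = 0 := by
        unfold dL
        rw [cos_zero, hsα]
        convert Real.sqrt_zero using 2
        ring
      unfold Rfun Lfun
      rw [h1, h3]
      have : 2 * d / 4 = d / 2 := by ring
      rw [this, zero_div, arcsin_zero]
      linarith
    have hI := hmem h0
    obtain ⟨σ₀, hσ₀, he₀⟩ : ∃ σ₀ ∈ Set.Icc 0 π,
        Lfun d σ₀ (π - arcsin (d / 2)) = Rfun d σ₀ (π - arcsin (d / 2)) := by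
      obtain ⟨x, hx, -, h | ⟨rfl, h⟩⟩ := aux_push h0 (by linarith) ⟨le_rfl, hpp.le⟩ hleft
      · exact ⟨x, hx, h⟩
      · exact ⟨_, hx, le_antisymm hcorner h⟩
    refine ⟨σ₀, hσ₀, aux_Afun hσ₀ hI ?_⟩
    intro σ hσ δ hδ
    have fin : ∀ σ', ∀ δ' ∈ Set.Icc (Real.arcsin (d / 2)) (π - Real.arcsin (d / 2)),
        Lfun d σ' δ' = Rfun d σ' δ' → Cfun d σ' δ' ≤ Cfun d σ₀ (π - arcsin (d / 2)) := by
      intro σ' δ' hδ' he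
      exact aux_cmp h0 h2 (by linarith) (by rw [hsα]; exact aux_sin_ge h0 h2 hδ') he he₀
    obtain ⟨σ', hσ', δ', hδ', hC, ⟨he, hge⟩ | ⟨rfl, hRL⟩⟩ := aux_reduce h0 h2 hσ hδ
    · exact hC.trans (fin _ _ hδ' he)
    · refine hC.trans ?_
      have hαI : arcsin (d / 2) ∈ Set.Icc (arcsin (d / 2)) (π - arcsin (d / 2)) :=
        ⟨le_rfl, hI.1⟩
      have hs := aux_sin_ge h0 h2 hαI
      obtain ⟨y, hy, hye⟩ := @aux_ivt_δ d (arcsin (d / 2)) δ' hδ'.1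
        (by
          have : arcsin (dR d π (arcsin (d / 2)) / 4) ≤ arcsin (dL d π (arcsin (d / 2)) / 4) := by
            apply monotone_arcsin
            rw [aux_dRpi hs, aux_dLpi h0 hs]
            linarith
          unfold Lfun Rfun
          linarith) hRL
      have hyI : y ∈ Set.Icc (arcsin (d / 2)) (π - arcsin (d / 2)) :=
        ⟨hy.1, hy.2.trans hδ'.2⟩
      refine le_trans ?_ (fin _ _ hyI hye)
      have h5 := aux_Ranti h0 h2 hyI hδ' hy.2
      have h6 : Cfun d π y = Rfun d π y := by rw [Cfun, hye, min_self]
      rw [h6, Cfun, min_eq_right hRL]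
      exact h5
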